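/- Let S be a commutative ℚ-algebra, R an associative S-algebra, A, B ∈ R, C := AB − BA, and suppose that for scalars α_1,…,α_{L+1}, δ, ε, β, λ_1,…,λ_M, η, ω_1,…,ω_L, ζ ∈ S one has AC − CA = Σ_{i=1}^{L+1} α_i A^i + δ·B + ε·1 + β·(AB+BA) and BC − CB = Σ_{i=1}^{M} λ_i A^i − β·B² + η·B + Σ_{i=1}^{L} ω_i·(A^i B + B A^i) + ζ·1. Then there exist scalars k_1, …, k_{M+1} ∈ S such that the element K := C² − Σ_{i=1}^{L+1} α_i·(A^i B + B A^i) − β·Σ_{i=1}^{L} ω_i·(A^i B + B A^i) − β·(A B² + B² A) + Σ_{i=1}^{M+1} k_i A^i − (2ε + βη)·B + (β² − δ)·B² satisfies AK − KA = 0 and BK − KB = 0. -/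

import Mathlib

/-!
For `C = [A, B]`, the relation `[A, C] = P + δB + β{A, B}` with `P` commuting with `A` yields
`[A, [A, x]] = δx + β{A, x}` for every `x = [A ^ n, B]`. Comparing with
`4 A x A = {A, {A, x}} - [A, [A, x]]` gives, by induction,
`(n + 1) {A, [A ^ n, B]} ≡ 2n [A ^ (n + 1), B]` modulo the brackets `[A ^ i, B]` with `i ≤ n`.
Since `{A ^ n, C} = 2 [A ^ (n + 1), B] - {A, [A ^ n, B]}`, each `{A ^ n, C}` is a combination of
the `[A ^ i, B]` with `i ≤ n + 1`, as soon as `(n + 1)!` is invertible.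

Write `[B, C] = Λ - βB² + ηB + {W, B}` with `Λ` and `W` polynomials in `A`. The Jacobi identity
gives `[B, P] = {W, C} + ηC`. A direct computation then shows that `K` commutes with `A`, and that
it commutes with `B` as soon as its polynomial part `k` satisfies
`[k, B] = {Λ, C} + [W² + ηW, B]`. The right-hand side is a combination of the `[A ^ i, B]`, and the
same combination of the `A ^ i` is the required `k`.
-/

open scoped Nat

attribute [local instance] LieRing.ofAssociativeRing

local notation "⁅" x "," y "⁆₊" => x * y + y * x

section Ring

variable {R : Type*} [Ring R]

theorem lie_sq (x y : R) : ⁅x, y ^ 2⁆ = ⁅y, ⁅x, y⁆⁆₊ := by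
  simp only [Ring.lie_def]
  noncomm_ring

theorem lie_anticommutator (x y z : R) : ⁅x, ⁅y, z⁆₊⁆ = ⁅⁅x, y⁆, z⁆₊ + ⁅y, ⁅x, z⁆⁆₊ := by
  simp only [Ring.lie_def]
  noncomm_ring

theorem anticommutator_anticommutator_sub (x y z : R) :
    ⁅x, ⁅y, z⁆₊⁆₊ - ⁅y, ⁅x, z⁆₊⁆₊ = ⁅z, ⁅y, x⁆⁆ := by
  simp only [Ring.lie_def]
  noncomm_ring

theorem four_nsmul_mul_mul (x y : R) : 4 • (x * y * x) = ⁅x, ⁅x, y⁆₊⁆₊ - ⁅x, ⁅x, y⁆⁆ := by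
  simp only [Ring.lie_def]
  noncomm_ring

theorem anticommutator_lie_pow_succ (A B : R) (n : ℕ) :
    ⁅A, ⁅A ^ (n + 1), B⁆⁆₊ = ⁅A ^ (n + 2), B⁆ + A * ⁅A ^ n, B⁆ * A := by
  simp only [Ring.lie_def, mul_sub, sub_mul, pow_succ' A (n + 1), mul_assoc, ← pow_succ]
  simp only [← mul_assoc, ← pow_succ']
  abel

theorem anticommutator_pow_lie (A B : R) (n : ℕ) :
    ⁅A ^ n, ⁅A, B⁆⁆₊ = 2 • ⁅A ^ (n + 1), B⁆ - ⁅A, ⁅A ^ n, B⁆⁆₊ := by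
  simp only [Ring.lie_def, mul_sub, sub_mul, mul_assoc, ← pow_succ]
  simp only [← mul_assoc, ← pow_succ, ← pow_succ']
  abel

end Ring

theorem isUnit_natCast_of_dvd {S : Type*} [CommSemiring S] {m n : ℕ} (hmn : m ∣ n)
    (hn : IsUnit (n : S)) : IsUnit (m : S) :=
  isUnit_of_dvd_unit (Nat.cast_dvd_cast hmn) hn

section LieSpanPow

variable {S R : Type*} [CommRing S] [Ring R] [Algebra S R] {A B P : R} {δ β : S}

variable (S A B) in
/-- The `S`-span of the brackets `⁅A ^ i, B⁆` with `1 ≤ i ≤ n`, in which the polynomial part of the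
Casimir element is found. The index `0` is left out because `⁅A ^ 0, B⁆ = 0`. -/
def lieSpanPow (n : ℕ) : Submodule S R :=
  Submodule.span S ((fun i => ⁅A ^ i, B⁆) '' Set.Icc 1 n)

theorem lie_pow_mem_lieSpanPow {i n : ℕ} (hi : i ≤ n) : ⁅A ^ i, B⁆ ∈ lieSpanPow S A B n := by
  rcases i.eq_zero_or_pos with rfl | hpos
  · simp only [pow_zero, (Commute.one_left B).lie_eq, zero_mem]
  · exact Submodule.subset_span ⟨i, ⟨hpos, hi⟩, rfl⟩

theorem lieSpanPow_mono : Monotone (lieSpanPow S A B) := fun _ _ h =>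
  Submodule.span_mono (Set.image_mono (Set.Icc_subset_Icc_right h))

theorem exists_lie_sum_pow_eq_of_mem_lieSpanPow {n : ℕ} {x : R} (hx : x ∈ lieSpanPow S A B n) :
    ∃ k : ℕ → S, ⁅∑ i ∈ Finset.Icc 1 n, k i • A ^ i, B⁆ = x := by
  obtain ⟨k, hk, rfl⟩ := (Finsupp.mem_span_image_iff_linearCombination S).1 hx
  have hsupp : k.support ⊆ Finset.Icc 1 n := by
    rw [← Finset.coe_subset, Finset.coe_Icc]
    exact hk
  refine ⟨k, ?_⟩
  rw [Finsupp.linearCombination_apply, Finsupp.sum_of_support_subset k hsupp _ (by simp), sum_lie]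
  simp only [smul_lie]

theorem anticommutator_mem_lieSpanPow_succ {n : ℕ}
    (h : ∀ i ≤ n, ⁅A, ⁅A ^ i, B⁆⁆₊ ∈ lieSpanPow S A B (i + 1)) {x : R}
    (hx : x ∈ lieSpanPow S A B n) : ⁅A, x⁆₊ ∈ lieSpanPow S A B (n + 1) := by
  suffices lieSpanPow S A B n ≤
      (lieSpanPow S A B (n + 1)).comap (LinearMap.mulLeft S A + LinearMap.mulRight S A) from this hx
  refine Submodule.span_le.2 ?_
  rintro _ ⟨i, ⟨-, hi⟩, rfl⟩
  exact lieSpanPow_mono (by gcongr) (h i hi)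

theorem lie_sum_pow_mem_lieSpanPow {s : Finset ℕ} {n : ℕ} (hs : ∀ i ∈ s, i ≤ n) (c : ℕ → S) :
    ⁅∑ i ∈ s, c i • A ^ i, B⁆ ∈ lieSpanPow S A B n := by
  simp only [sum_lie, smul_lie]
  exact sum_mem fun i hi => Submodule.smul_mem _ _ (lie_pow_mem_lieSpanPow (hs i hi))

theorem lie_sq_sum_pow_mem_lieSpanPow {s : Finset ℕ} {n : ℕ} (hs : ∀ i ∈ s, 2 * i ≤ n)
    (c : ℕ → S) : ⁅(∑ i ∈ s, c i • A ^ i) ^ 2, B⁆ ∈ lieSpanPow S A B n := by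
  simp only [pow_two, Finset.sum_mul_sum, smul_mul_smul_comm, ← pow_add, sum_lie, smul_lie]
  refine sum_mem fun i hi => sum_mem fun j hj => Submodule.smul_mem _ _ (lie_pow_mem_lieSpanPow ?_)
  have := hs i hi
  have := hs j hj
  omega

theorem lie_lie_lie_of_commute {X : R} (hXA : Commute X A) (hXP : Commute X P)
    (hAC : ⁅A, ⁅A, B⁆⁆ = P + δ • B + β • ⁅A, B⁆₊) :
    ⁅A, ⁅A, ⁅X, B⁆⁆⁆ = δ • ⁅X, B⁆ + β • ⁅A, ⁅X, B⁆⁆₊ := by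
  have lie_left_comm (y : R) : ⁅A, ⁅X, y⁆⁆ = ⁅X, ⁅A, y⁆⁆ := by
    rw [leibniz_lie, hXA.symm.lie_eq, zero_lie, zero_add]
  rw [lie_left_comm, lie_left_comm, hAC]
  simp only [lie_add, LieAlgebra.lie_smul, hXP.lie_eq, lie_anticommutator X A B, hXA.lie_eq,
    zero_mul, mul_zero, zero_add]

variable (S A B) in
/-- The difference between `(n + 1) {A, ⁅A ^ n, B⁆}` and its leading term `2n ⁅A ^ (n + 1), B⁆`.
The leading coefficient is the one forced by `⁅A ^ n, B⁆ = ∑ A ^ i ⁅A, B⁆ A ^ j` over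
`i + j = n - 1`, when left and right multiplication by `A` are identified. -/
def anticommutatorRemainder (n : ℕ) : R :=
  ((n + 1 : ℕ) : S) • ⁅A, ⁅A ^ n, B⁆⁆₊ - (2 * n : S) • ⁅A ^ (n + 1), B⁆

theorem anticommutator_mem_of_anticommutatorRemainder_mem {n : ℕ} (hn : IsUnit ((n + 1 : ℕ) : S))
    (h : anticommutatorRemainder S A B n ∈ lieSpanPow S A B n) :
    ⁅A, ⁅A ^ n, B⁆⁆₊ ∈ lieSpanPow S A B (n + 1) := by
  rw [← Submodule.smul_mem_iff_of_isUnit _ hn]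
  exact (Submodule.sub_mem_iff_left _ (Submodule.smul_mem _ _ (lie_pow_mem_lieSpanPow le_rfl))).1
    (lieSpanPow_mono n.le_succ h)

theorem two_smul_anticommutatorRemainder_succ (hAP : Commute A P)
    (hAC : ⁅A, ⁅A, B⁆⁆ = P + δ • B + β • ⁅A, B⁆₊) (n : ℕ) :
    (2 : S) • anticommutatorRemainder S A B (n + 1) =
      ⁅A, anticommutatorRemainder S A B n⁆₊
        - ((n + 1 : ℕ) : S) • (δ • ⁅A ^ n, B⁆ + β • ⁅A, ⁅A ^ n, B⁆⁆₊) := by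
  have hrec : 4 • ⁅A, ⁅A ^ (n + 1), B⁆⁆₊ = 4 • ⁅A ^ (n + 2), B⁆ + (⁅A, ⁅A, ⁅A ^ n, B⁆⁆₊⁆₊
      - (δ • ⁅A ^ n, B⁆ + β • ⁅A, ⁅A ^ n, B⁆⁆₊)) := by
    rw [anticommutator_lie_pow_succ, smul_add, four_nsmul_mul_mul,
      lie_lie_lie_of_commute (Commute.pow_self A n) (hAP.pow_left n) hAC]
  simp only [anticommutatorRemainder, Nat.cast_add, Nat.cast_one, mul_add, add_mul, mul_sub,
    sub_mul, mul_smul_comm, smul_mul_assoc] at hrec ⊢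
  linear_combination (norm := module) (n + 1 : S) • hrec

theorem anticommutatorRemainder_mem_lieSpanPow (hAP : Commute A P)
    (hAC : ⁅A, ⁅A, B⁆⁆ = P + δ • B + β • ⁅A, B⁆₊) {n : ℕ} (hn : IsUnit ((n + 1)! : S)) :
    anticommutatorRemainder S A B n ∈ lieSpanPow S A B n := by
  induction n using Nat.strong_induction_on with | _ n ih
  rcases n with _ | n
  · simp [anticommutatorRemainder, (Commute.one_left B).lie_eq]
  have remainder_mem (i : ℕ) (hi : i ≤ n) :
      anticommutatorRemainder S A B i ∈ lieSpanPow S A B i :=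
    ih i (by omega) (isUnit_natCast_of_dvd (Nat.factorial_dvd_factorial (by omega)) hn)
  have anticommutator_mem (i : ℕ) (hi : i ≤ n) :
      ⁅A, ⁅A ^ i, B⁆⁆₊ ∈ lieSpanPow S A B (i + 1) :=
    anticommutator_mem_of_anticommutatorRemainder_mem
      (isUnit_natCast_of_dvd (Nat.dvd_factorial i.succ_pos (by omega)) hn) (remainder_mem i hi)
  have isUnit_two : IsUnit (2 : S) :=
    mod_cast isUnit_natCast_of_dvd (m := 2) (Nat.dvd_factorial two_pos (by omega)) hn
  rw [← Submodule.smul_mem_iff_of_isUnit _ isUnit_two,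
    two_smul_anticommutatorRemainder_succ hAP hAC]
  exact sub_mem (anticommutator_mem_lieSpanPow_succ anticommutator_mem (remainder_mem n le_rfl))
    (Submodule.smul_mem _ _ (add_mem (Submodule.smul_mem _ _ (lie_pow_mem_lieSpanPow n.le_succ))
      (Submodule.smul_mem _ _ (anticommutator_mem n le_rfl))))

theorem anticommutator_pow_lie_mem_lieSpanPow (hAP : Commute A P)
    (hAC : ⁅A, ⁅A, B⁆⁆ = P + δ • B + β • ⁅A, B⁆₊) {n : ℕ} (hn : IsUnit ((n + 1)! : S)) :
    ⁅A ^ n, ⁅A, B⁆⁆₊ ∈ lieSpanPow S A B (n + 1) := by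
  rw [anticommutator_pow_lie]
  exact sub_mem (Submodule.smul_of_tower_mem _ 2 (lie_pow_mem_lieSpanPow le_rfl))
    (anticommutator_mem_of_anticommutatorRemainder_mem
      (isUnit_natCast_of_dvd (Nat.dvd_factorial n.succ_pos le_rfl) hn)
      (anticommutatorRemainder_mem_lieSpanPow hAP hAC hn))

theorem sum_smul_anticommutator {ι : Type*} (s : Finset ι) (c : ι → S) (f : ι → R) (x : R) :
    ∑ i ∈ s, c i • ⁅f i, x⁆₊ = ⁅∑ i ∈ s, c i • f i, x⁆₊ := by
  simp only [Finset.sum_mul, Finset.mul_sum, ← Finset.sum_add_distrib, smul_add, smul_mul_assoc,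
    mul_smul_comm]

theorem anticommutator_sum_pow_add_lie_mem_lieSpanPow (hAP : Commute A P)
    (hAC : ⁅A, ⁅A, B⁆⁆ = P + δ • B + β • ⁅A, B⁆₊) {n : ℕ} (hn : IsUnit ((n + 1)! : S))
    {s : Finset ℕ} (hs : ∀ i ∈ s, i ≤ n) (c : ℕ → S) (z : S) :
    ⁅∑ i ∈ s, c i • A ^ i + z • (1 : R), ⁅A, B⁆⁆₊ ∈ lieSpanPow S A B (n + 1) := by
  have pow_mem {i : ℕ} (hi : i ≤ n) : ⁅A ^ i, ⁅A, B⁆⁆₊ ∈ lieSpanPow S A B (n + 1) :=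
    lieSpanPow_mono (Nat.succ_le_succ hi) (anticommutator_pow_lie_mem_lieSpanPow hAP hAC
      (isUnit_natCast_of_dvd (Nat.factorial_dvd_factorial (Nat.succ_le_succ hi)) hn))
  have expand : ⁅∑ i ∈ s, c i • A ^ i + z • (1 : R), ⁅A, B⁆⁆₊ =
      ∑ i ∈ s, c i • ⁅A ^ i, ⁅A, B⁆⁆₊ + z • ⁅A ^ 0, ⁅A, B⁆⁆₊ := by
    rw [sum_smul_anticommutator]
    simp only [add_mul, mul_add, smul_mul_assoc, mul_smul_comm, pow_zero, smul_add]
    abel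
  rw [expand]
  exact add_mem (sum_mem fun i hi => Submodule.smul_mem _ _ (pow_mem (hs i hi)))
    (Submodule.smul_mem _ _ (pow_mem n.zero_le))

end LieSpanPow

section Casimir

variable {S R : Type*} [CommRing S] [Ring R] [Algebra S R] {A B P W Λ k : R} {δ β η : S}

theorem lie_eq_anticommutator_add_of_jacobi (hAW : Commute A W) (hAΛ : Commute A Λ)
    (hAC : ⁅A, ⁅A, B⁆⁆ = P + δ • B + β • ⁅A, B⁆₊)
    (hBC : ⁅B, ⁅A, B⁆⁆ = Λ - β • B ^ 2 + η • B + ⁅W, B⁆₊) :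
    ⁅B, P⁆ = ⁅W, ⁅A, B⁆⁆₊ + η • ⁅A, B⁆ := by
  have jacobi : ⁅A, ⁅B, ⁅A, B⁆⁆⁆ = ⁅B, ⁅A, ⁅A, B⁆⁆⁆ := by
    rw [leibniz_lie, lie_self, zero_add]
  rw [hAC, hBC] at jacobi
  simp only [lie_add, lie_sub, LieAlgebra.lie_smul, lie_self, lie_sq, hAΛ.lie_eq, hAW.lie_eq,
    lie_anticommutator A W B, lie_anticommutator B A B, ← lie_skew B A, mul_neg, neg_mul,
    zero_mul, mul_zero] at jacobi
  linear_combination (norm := module) -jacobi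

variable (A B P W k δ β η) in
/-- The Casimir element of the relations `⁅A, C⁆ = P + δB + β{A, B}` and
`⁅B, C⁆ = Λ - βB² + ηB + {W, B}`, where `C = ⁅A, B⁆`. The elements `P`, `W`, `Λ` and the
part `k` to be determined stand for polynomials in `A`; they are arbitrary elements here because the
computations only use that they commute with `A`. -/
def casimir : R :=
  ⁅A, B⁆ ^ 2 - ⁅P, B⁆₊ - β • ⁅W, B⁆₊ - β • ⁅A, B ^ 2⁆₊ + k - (β * η) • B + (β ^ 2 - δ) • B ^ 2

theorem commute_casimir_left (hAP : Commute A P) (hAW : Commute A W) (hAΛ : Commute A Λ)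
    (hAk : Commute A k) (hAC : ⁅A, ⁅A, B⁆⁆ = P + δ • B + β • ⁅A, B⁆₊)
    (hBC : ⁅B, ⁅A, B⁆⁆ = Λ - β • B ^ 2 + η • B + ⁅W, B⁆₊) :
    Commute A (casimir A B P W k δ β η) := by
  have hBP := lie_eq_anticommutator_add_of_jacobi hAW hAΛ hAC hBC
  have exchange : ⁅⁅A, B⁆, ⁅A, B⁆₊⁆₊ - ⁅A, ⁅⁅A, B⁆, B⁆₊⁆₊ =
      ⁅W, ⁅A, B⁆⁆₊ + η • ⁅A, B⁆ - β • ⁅⁅A, B⁆, B⁆₊ := by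
    rw [anticommutator_anticommutator_sub, hAC]
    simp only [lie_add, LieAlgebra.lie_smul, lie_self, hBP, lie_anticommutator B A B,
      ← lie_skew B A, mul_neg, neg_mul, zero_mul, mul_zero]
    module
  rw [commute_iff_lie_eq]
  simp only [casimir, lie_add, lie_sub, LieAlgebra.lie_smul, lie_sq, lie_anticommutator A _ B,
    lie_anticommutator A _ (B ^ 2), hAP.lie_eq, hAW.lie_eq, hAk.lie_eq, lie_self, hAC]
  simp only [mul_add, add_mul, mul_smul_comm, smul_mul_assoc, zero_mul, mul_zero] at exchange ⊢
  linear_combination (norm := module) β • exchange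

theorem commute_casimir_right (hAW : Commute A W) (hAΛ : Commute A Λ) (hWΛ : Commute W Λ)
    (hAC : ⁅A, ⁅A, B⁆⁆ = P + δ • B + β • ⁅A, B⁆₊)
    (hBC : ⁅B, ⁅A, B⁆⁆ = Λ - β • B ^ 2 + η • B + ⁅W, B⁆₊)
    (hk : ⁅k, B⁆ = ⁅Λ, ⁅A, B⁆⁆₊ + ⁅W ^ 2 + η • W, B⁆) :
    Commute B (casimir A B P W k δ β η) := by
  have hBP := lie_eq_anticommutator_add_of_jacobi hAW hAΛ hAC hBC
  have hBk : ⁅B, k⁆ = -(⁅Λ, ⁅A, B⁆⁆₊ + ⁅W ^ 2 + η • W, B⁆) := by rw [← hk, lie_skew]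
  have lie_anticommutator_self : ⁅W, ⁅W, B⁆₊⁆ = ⁅W ^ 2, B⁆ := by
    simp only [Ring.lie_def]
    noncomm_ring
  have exchange : ⁅⁅A, B⁆, ⁅B, W⁆₊⁆₊ - ⁅B, ⁅⁅A, B⁆, W⁆₊⁆₊ =
      ⁅W ^ 2 + η • W, B⁆ - β • ⁅B, ⁅W, B⁆⁆₊ := by
    rw [anticommutator_anticommutator_sub, hBC]
    simp only [lie_add, lie_sub, LieAlgebra.lie_smul, hWΛ.lie_eq, lie_anticommutator_self, lie_sq,
      add_lie, smul_lie]
    module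
  rw [commute_iff_lie_eq]
  simp only [casimir, lie_add, lie_sub, LieAlgebra.lie_smul, lie_sq, lie_anticommutator B _ B,
    lie_anticommutator B _ (B ^ 2), hBP, hBk, ← lie_skew B A, ← lie_skew B W, lie_self, hBC]
  simp only [mul_add, add_mul, mul_sub, sub_mul, mul_smul_comm, smul_mul_assoc, mul_neg, neg_mul,
    zero_mul, mul_zero, mul_assoc] at exchange ⊢
  linear_combination (norm := module) exchange

theorem commute_sum_smul_pow {X : R} (hXA : Commute X A) (s : Finset ℕ) (c : ℕ → S) :
    Commute X (∑ i ∈ s, c i • A ^ i) :=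
  Commute.sum_right _ _ _ fun i _ => (hXA.pow_right i).smul_right _

theorem commute_smul_one (X : R) (c : S) : Commute X (c • (1 : R)) :=
  (Commute.one_right X).smul_right c

theorem exists_casimir_mem_centralizer {n : ℕ} (hAP : Commute A P) (hAW : Commute A W)
    (hAΛ : Commute A Λ) (hWΛ : Commute W Λ) (hAC : ⁅A, ⁅A, B⁆⁆ = P + δ • B + β • ⁅A, B⁆₊)
    (hBC : ⁅B, ⁅A, B⁆⁆ = Λ - β • B ^ 2 + η • B + ⁅W, B⁆₊)
    (hmem : ⁅Λ, ⁅A, B⁆⁆₊ + ⁅W ^ 2 + η • W, B⁆ ∈ lieSpanPow S A B n) :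
    ∃ k : ℕ → S, casimir A B P W (∑ i ∈ Finset.Icc 1 n, k i • A ^ i) δ β η ∈
      Set.centralizer {A, B} := by
  obtain ⟨k, hk⟩ := exists_lie_sum_pow_eq_of_mem_lieSpanPow hmem
  have hAk := commute_sum_smul_pow (.refl A) (Finset.Icc 1 n) k
  refine ⟨k, Set.mem_centralizer_iff.2 ?_⟩
  rintro _ (rfl | rfl)
  · exact commute_casimir_left hAP hAW hAΛ hAk hAC hBC
  · exact commute_casimir_right hAW hAΛ hWΛ hAC hBC hk

end Casimir

theorem stmt11_general {S R : Type*} [CommRing S] [Ring R] [Algebra S R]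
    (M L N : ℕ) (hM : IsUnit ((M + 1)! : S)) (hL : 2 * L ≤ M + 1)
    (A B C : R) (hC : C = A * B - B * A)
    (α lam ω : ℕ → S) (δ ε β η ζ : S)
    (hAC : A * C - C * A =
      ∑ i ∈ Finset.Icc 1 N, α i • A ^ i + δ • B + ε • (1 : R) + β • (A * B + B * A))
    (hBC : B * C - C * B =
      ∑ i ∈ Finset.Icc 1 M, lam i • A ^ i - β • B ^ 2 + η • B
        + ∑ i ∈ Finset.Icc 1 L, ω i • (A ^ i * B + B * A ^ i) + ζ • (1 : R)) :
    ∃ k : ℕ → S,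
      C ^ 2 - ∑ i ∈ Finset.Icc 1 N, α i • (A ^ i * B + B * A ^ i)
          - β • ∑ i ∈ Finset.Icc 1 L, ω i • (A ^ i * B + B * A ^ i)
          - β • (A * B ^ 2 + B ^ 2 * A)
          + ∑ i ∈ Finset.Icc 1 (M + 1), k i • A ^ i
          - (2 * ε + β * η) • B + (β ^ 2 - δ) • B ^ 2 ∈ Set.centralizer {A, B} := by
  rw [← Ring.lie_def] at hC
  subst hC
  simp only [sum_smul_anticommutator] at hBC ⊢
  set W := ∑ i ∈ Finset.Icc 1 L, ω i • A ^ i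
  set P := ∑ i ∈ Finset.Icc 1 N, α i • A ^ i + ε • (1 : R) with hP
  set Λ := ∑ i ∈ Finset.Icc 1 M, lam i • A ^ i + ζ • (1 : R) with hΛ
  have hAW : Commute A W := commute_sum_smul_pow (.refl A) _ ω
  have hAP : Commute A P := (commute_sum_smul_pow (.refl A) _ α).add_right (commute_smul_one A ε)
  have hAΛ : Commute A Λ := (commute_sum_smul_pow (.refl A) _ lam).add_right (commute_smul_one A ζ)
  have hWΛ : Commute W Λ := (commute_sum_smul_pow hAW.symm _ lam).add_right (commute_smul_one W ζ)
  have hAC' : ⁅A, ⁅A, B⁆⁆ = P + δ • B + β • ⁅A, B⁆₊ := by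
    rw [Ring.lie_def, hAC, hP]
    abel
  have hBC' : ⁅B, ⁅A, B⁆⁆ = Λ - β • B ^ 2 + η • B + ⁅W, B⁆₊ := by
    rw [Ring.lie_def, hBC, hΛ]
    abel
  have hmem : ⁅Λ, ⁅A, B⁆⁆₊ + ⁅W ^ 2 + η • W, B⁆ ∈ lieSpanPow S A B (M + 1) := by
    rw [add_lie, smul_lie]
    exact add_mem (anticommutator_sum_pow_add_lie_mem_lieSpanPow hAP hAC' hM (by grind) lam ζ)
      (add_mem (lie_sq_sum_pow_mem_lieSpanPow (by grind) ω)
        (Submodule.smul_mem _ _ (lie_sum_pow_mem_lieSpanPow (by grind) ω)))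
  obtain ⟨k, hk⟩ := exists_casimir_mem_centralizer hAP hAW hAΛ hWΛ hAC' hBC' hmem
  refine ⟨k, ?_⟩
  convert hk using 1
  simp only [casimir, hP, add_mul, mul_add, smul_mul_assoc, mul_smul_comm, one_mul, mul_one]
  module

/-- Proposition 7 of the paper: over a commutative `ℚ`-algebra of scalars, given the
commutation relations of the polynomial Lie algebra `L_M`, there exist scalars
`k_1, …, k_{M+1}` so that the Casimir `K` commutes with both `A` and `B`. -/
theorem stmt11 {S R : Type*} [CommRing S] [Algebra ℚ S] [Ring R] [Algebra S R]
    (M : ℕ) (hM : 1 ≤ M) (L : ℕ) (hL : L = M / 2)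
    (A B C : R) (hC : C = A * B - B * A)
    (α lam ω : ℕ → S) (δ ε β η ζ : S)
    (hAC : A * C - C * A =
      ∑ i ∈ Finset.Icc 1 (L + 1), α i • A ^ i + δ • B + ε • (1 : R) + β • (A * B + B * A))
    (hBC : B * C - C * B =
      ∑ i ∈ Finset.Icc 1 M, lam i • A ^ i - β • B ^ 2 + η • B
        + ∑ i ∈ Finset.Icc 1 L, ω i • (A ^ i * B + B * A ^ i) + ζ • (1 : R)) :
    ∃ k : ℕ → S,
      (A * (C ^ 2 - ∑ i ∈ Finset.Icc 1 (L + 1), α i • (A ^ i * B + B * A ^ i)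
          - β • ∑ i ∈ Finset.Icc 1 L, ω i • (A ^ i * B + B * A ^ i)
          - β • (A * B ^ 2 + B ^ 2 * A)
          + ∑ i ∈ Finset.Icc 1 (M + 1), k i • A ^ i
          - (2 * ε + β * η) • B + (β ^ 2 - δ) • B ^ 2)
        - (C ^ 2 - ∑ i ∈ Finset.Icc 1 (L + 1), α i • (A ^ i * B + B * A ^ i)
          - β • ∑ i ∈ Finset.Icc 1 L, ω i • (A ^ i * B + B * A ^ i)
          - β • (A * B ^ 2 + B ^ 2 * A)
          + ∑ i ∈ Finset.Icc 1 (M + 1), k i • A ^ i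
          - (2 * ε + β * η) • B + (β ^ 2 - δ) • B ^ 2) * A = 0)
      ∧ (B * (C ^ 2 - ∑ i ∈ Finset.Icc 1 (L + 1), α i • (A ^ i * B + B * A ^ i)
          - β • ∑ i ∈ Finset.Icc 1 L, ω i • (A ^ i * B + B * A ^ i)
          - β • (A * B ^ 2 + B ^ 2 * A)
          + ∑ i ∈ Finset.Icc 1 (M + 1), k i • A ^ i
          - (2 * ε + β * η) • B + (β ^ 2 - δ) • B ^ 2)
        - (C ^ 2 - ∑ i ∈ Finset.Icc 1 (L + 1), α i • (A ^ i * B + B * A ^ i)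
          - β • ∑ i ∈ Finset.Icc 1 L, ω i • (A ^ i * B + B * A ^ i)
          - β • (A * B ^ 2 + B ^ 2 * A)
          + ∑ i ∈ Finset.Icc 1 (M + 1), k i • A ^ i
          - (2 * ε + β * η) • B + (β ^ 2 - δ) • B ^ 2) * B = 0) := by
  have hunit : IsUnit ((M + 1)! : S) := by
    rw [← map_natCast (algebraMap ℚ S)]
    exact (Nat.cast_ne_zero.2 (Nat.factorial_ne_zero _)).isUnit.map _
  obtain ⟨k, hk⟩ := stmt11_general M L (L + 1) hunit (by omega) A B C hC α lam ω δ ε β η ζ hAC hBC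
  exact ⟨k, sub_eq_zero.2 (hk A (by simp)), sub_eq_zero.2 (hk B (by simp))⟩
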